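/- arXiv:1203.2320 — 2 statements merged into one kernel-verified Lean document; each statement's English description precedes it below -/
import Mathlib

section
/- Let p ≥ 5 and let B_{2p+2} be the braid group with Artin generators σ_1,…,σ_{2p+1}. Set ρ_3 = σ_3σ_2σ_4σ_3σ_1 and ρ_{2i+1} = σ_{2i+1}σ_{2i}σ_{2i+2}σ_{2i+1} for i ≥ 2. Then the product (ρ_3ρ_5⋯ρ_{2p−7})(ρ_3ρ_5⋯ρ_{2p−9})⋯(ρ_3ρ_5)(ρ_3), i.e. the product over t = p−4, p−5, …, 1 (in this order) of the blocks ρ_3ρ_5⋯ρ_{2t+1}, equals σ_1^{−1}·(∏_{i=4}^{p−1} (σ_3σ_4⋯σ_{2(p−i)+2})(σ_1σ_2⋯σ_{2(p−i)+1}))·σ_1, where the product over i is taken in increasing order of i. -/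
/-- The Artin braid relations on `m` generators (generator `i : Fin m`
    represents the Artin generator `σ_{i+1}`). -/
def braidRels (m : ℕ) : Set (FreeGroup (Fin m)) :=
  {r | (∃ i j : Fin m, (i : ℕ) + 2 ≤ (j : ℕ) ∧
        r = FreeGroup.of i * FreeGroup.of j * (FreeGroup.of i)⁻¹ * (FreeGroup.of j)⁻¹) ∨
      (∃ i j : Fin m, (j : ℕ) = (i : ℕ) + 1 ∧
        r = FreeGroup.of i * FreeGroup.of j * FreeGroup.of i *
            (FreeGroup.of j * FreeGroup.of i * FreeGroup.of j)⁻¹)}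

/-- The braid group on `n` strands, presented by the Artin generators
    `σ_1, …, σ_{n-1}` and the braid relations. -/
def BraidGroup (n : ℕ) : Type := PresentedGroup (braidRels (n - 1))

instance (n : ℕ) : Group (BraidGroup n) :=
  inferInstanceAs (Group (PresentedGroup (braidRels (n - 1))))

/-- The Artin generator `σ_i` of `BraidGroup n` (1-based: `1 ≤ i ≤ n-1`);
    out-of-range indices give the identity. -/
def σ (n i : ℕ) : BraidGroup n :=
  if h : 1 ≤ i ∧ i ≤ n - 1 then
    (PresentedGroup.of ⟨i - 1, by omega⟩ : PresentedGroup (braidRels (n - 1)))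
  else 1

/-- The add-tail minimal conjugator `ρ_{2i+1}` in `B_n`:
`ρ_3 = σ_3σ_2σ_4σ_3σ_1` (the case `i = 1`) and
`ρ_{2i+1} = σ_{2i+1}σ_{2i}σ_{2i+2}σ_{2i+1}` for `i ≥ 2`. -/
def ρ (n i : ℕ) : BraidGroup n :=
  if i = 1 then σ n 3 * σ n 2 * σ n 4 * σ n 3 * σ n 1
  else σ n (2 * i + 1) * σ n (2 * i) * σ n (2 * i + 2) * σ n (2 * i + 1)

/-- The ascending product of generators `σ_a σ_{a+1} ⋯ σ_b` in `B_n`. -/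
def asc (n a b : ℕ) : BraidGroup n :=
  ((List.range (b + 1 - a)).map (fun t => σ n (a + t))).prod

/-- The block `ρ_3 ρ_5 ⋯ ρ_{2t+1}` in `B_n`. -/
def rhoBlock (n t : ℕ) : BraidGroup n :=
  ((List.range t).map (fun s => ρ n (s + 1))).prod

/-!
Write `X_j = σ_{j+1} σ_j σ_{j+2} σ_{j+1}` for the braid that crosses the pair of strands
`j, j+1` with the pair `j+2, j+3`. Only far commutativity is needed: by induction on `k`,
`(σ_3 ⋯ σ_{2k+2})(σ_1 ⋯ σ_{2k+1}) = σ_1 X_2 X_4 ⋯ X_{2k}`, because the last two generators of the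
first factor pass all of the second except its last two, with which they form `X_{2k}`. Moreover
`ρ_3 = X_2 σ_1`, and `σ_1` commutes with `ρ_{2i+1} = X_{2i}` for `i ≥ 2`, so
`ρ_3 ρ_5 ⋯ ρ_{2k+1} = X_2 X_4 ⋯ X_{2k} σ_1`. Hence each block on the left is the conjugate by `σ_1`
of the corresponding factor on the right.
-/

theorem commute_of_braidRels {m : ℕ} {i j : Fin m} (h : (i : ℕ) + 2 ≤ j) :
    Commute (PresentedGroup.of i : PresentedGroup (braidRels m)) (PresentedGroup.of j) := by
  have hrel := PresentedGroup.one_of_mem (rels := braidRels m) (Or.inl ⟨i, j, h, rfl⟩)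
  simp only [map_mul, map_inv, mul_inv_eq_iff_eq_mul, one_mul] at hrel
  exact hrel

theorem σ_eq_of {n i : ℕ} (h : 1 ≤ i ∧ i ≤ n - 1) :
    σ n i = (PresentedGroup.of ⟨i - 1, by omega⟩ : PresentedGroup (braidRels (n - 1))) :=
  dif_pos h

theorem σ_eq_one {n i : ℕ} (h : ¬(1 ≤ i ∧ i ≤ n - 1)) : σ n i = 1 :=
  dif_neg h

theorem σ_commute (n : ℕ) {i j : ℕ} (hij : i + 2 ≤ j) : Commute (σ n i) (σ n j) := by
  by_cases hi : 1 ≤ i ∧ i ≤ n - 1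
  · by_cases hj : 1 ≤ j ∧ j ≤ n - 1
    · rw [σ_eq_of hi, σ_eq_of hj]
      exact commute_of_braidRels (show i - 1 + 2 ≤ j - 1 by omega)
    · rw [σ_eq_one hj]
      exact Commute.one_right _
  · rw [σ_eq_one hi]
    exact Commute.one_left _

theorem asc_succ (n : ℕ) {a b : ℕ} (h : a ≤ b + 1) :
    asc n a (b + 1) = asc n a b * σ n (b + 1) := by
  rw [asc, Nat.succ_sub h, List.prod_range_succ, Nat.add_sub_cancel' h, asc]

theorem asc_self (n a : ℕ) : asc n a a = σ n a := by
  simp [asc]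

theorem asc_eq_one (n : ℕ) {a b : ℕ} (h : b < a) : asc n a b = 1 := by
  rw [asc, Nat.sub_eq_zero_of_le h, List.range_zero, List.map_nil, List.prod_nil]

theorem asc_commute_σ (n a : ℕ) {b j : ℕ} (h : b + 2 ≤ j) : Commute (asc n a b) (σ n j) := by
  refine Commute.list_prod_left _ _ fun x hx => ?_
  obtain ⟨t, ht, rfl⟩ := List.mem_map.mp hx
  have ht' := List.mem_range.mp ht
  exact σ_commute n (by omega)

/-- The crossing of the strands `j, j + 1` with the strands `j + 2, j + 3`: the common
part of the conjugators `ρ_{2i+1}`, for `j = 2 * i`. -/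
def pairCrossing (n j : ℕ) : BraidGroup n :=
  σ n (j + 1) * σ n j * σ n (j + 2) * σ n (j + 1)

theorem σ_commute_pairCrossing (n : ℕ) {i j : ℕ} (h : i + 2 ≤ j) :
    Commute (σ n i) (pairCrossing n j) :=
  (((σ_commute n (by omega)).mul_right (σ_commute n h)).mul_right
    (σ_commute n (by omega))).mul_right (σ_commute n (by omega))

theorem ρ_one (n : ℕ) : ρ n 1 = pairCrossing n 2 * σ n 1 :=
  rfl

theorem ρ_of_ne_one (n : ℕ) {i : ℕ} (hi : i ≠ 1) : ρ n i = pairCrossing n (2 * i) :=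
  if_neg hi

/-- The braid passing the strands `a + 1, a + 2` across the next `k` pairs of strands, one pair
after the other. -/
def pairSweep (n a k : ℕ) : BraidGroup n :=
  ((List.range k).map fun s => pairCrossing n (a + 2 * s + 1)).prod

theorem pairSweep_succ (n a k : ℕ) :
    pairSweep n a (k + 1) = pairSweep n a k * pairCrossing n (a + 2 * k + 1) :=
  List.prod_range_succ _ k

theorem asc_mul_asc (n a k : ℕ) :
    asc n (a + 2) (a + 2 * k + 1) * asc n a (a + 2 * k) = σ n a * pairSweep n a k := by
  induction k with
  | zero => simp [asc_eq_one, asc_self, pairSweep]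
  | succ k ih =>
    let m := a + 2 * k
    let A := asc n (a + 2) (m + 1)
    let B := asc n a m
    have hA : asc n (a + 2) (m + 3) = A * σ n (m + 2) * σ n (m + 3) := by
      rw [asc_succ n (by omega), asc_succ n (by omega)]
    have hB : asc n a (m + 2) = B * σ n (m + 1) * σ n (m + 2) := by
      rw [asc_succ n (by omega), asc_succ n (by omega)]
    have hpass : Commute B (σ n (m + 2) * σ n (m + 3)) :=
      (asc_commute_σ n a le_rfl).mul_right (asc_commute_σ n a (by omega))
    have hswap : Commute (σ n (m + 1)) (σ n (m + 3)) := σ_commute n le_rfl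
    calc asc n (a + 2) (m + 3) * asc n a (m + 2)
        = A * ((σ n (m + 2) * σ n (m + 3)) * B) * σ n (m + 1) * σ n (m + 2) := by
          rw [hA, hB]; simp only [mul_assoc]
      _ = A * B * (σ n (m + 2) * (σ n (m + 3) * σ n (m + 1)) * σ n (m + 2)) := by
          rw [← hpass.eq]; simp only [mul_assoc]
      _ = A * B * pairCrossing n (m + 1) := by
          rw [← hswap.eq, pairCrossing]; simp only [mul_assoc]
      _ = σ n a * pairSweep n a (k + 1) := by
          rw [ih, pairSweep_succ, mul_assoc]

theorem rhoBlock_succ (n k : ℕ) : rhoBlock n (k + 1) = rhoBlock n k * ρ n (k + 1) :=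
  List.prod_range_succ _ k

theorem rhoBlock_eq_pairSweep_mul (n : ℕ) {k : ℕ} (hk : 1 ≤ k) :
    rhoBlock n k = pairSweep n 1 k * σ n 1 := by
  induction k, hk using Nat.le_induction with
  | base => simp [rhoBlock, pairSweep, ρ_one]
  | succ k hk ih =>
    have hρ : ρ n (k + 1) = pairCrossing n (1 + 2 * k + 1) := by
      rw [ρ_of_ne_one n (by omega)]
      congr 1
      ring
    have hcomm : Commute (σ n 1) (ρ n (k + 1)) := by
      rw [hρ]
      exact σ_commute_pairCrossing n (by omega)
    rw [rhoBlock_succ, ih, mul_assoc, hcomm.eq, ← mul_assoc, hρ, ← pairSweep_succ]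

theorem rhoBlock_eq_conj (n : ℕ) {k : ℕ} (hk : 1 ≤ k) :
    rhoBlock n k = MulAut.conj (σ n 1)⁻¹ (asc n 3 (2 * k + 2) * asc n 1 (2 * k + 1)) := by
  have hasc : asc n 3 (2 * k + 2) * asc n 1 (2 * k + 1) = σ n 1 * pairSweep n 1 k := by
    convert asc_mul_asc n 1 k using 3 <;> ring
  rw [rhoBlock_eq_pairSweep_mul n hk, hasc, MulAut.conj_apply, inv_inv, inv_mul_cancel_left]

/-- Formula (∗), first equality: in `B_{2p+2}` with `p ≥ 5`,
`(ρ_3ρ_5⋯ρ_{2p-7})(ρ_3ρ_5⋯ρ_{2p-9})⋯(ρ_3ρ_5)(ρ_3)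
  = σ_1⁻¹ (∏_{i=4}^{p-1} (σ_3⋯σ_{2(p-i)+2})(σ_1⋯σ_{2(p-i)+1})) σ_1`,
where the left product is over `t = p-4, p-5, …, 1` (decreasing blocks) and the
right product is in increasing order of `i`. -/
theorem rho_check_formula (p : ℕ) (hp : 5 ≤ p) :
    ((List.range (p - 4)).map (fun s => rhoBlock (2 * p + 2) (p - 4 - s))).prod =
    (σ (2 * p + 2) 1)⁻¹ *
      ((List.range (p - 4)).map (fun t =>
        asc (2 * p + 2) 3 (2 * (p - (4 + t)) + 2) *
        asc (2 * p + 2) 1 (2 * (p - (4 + t)) + 1))).prod *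
      σ (2 * p + 2) 1 := by
  set τ := MulAut.conj (σ (2 * p + 2) 1)⁻¹ with hτ
  have hblock : ∀ t ∈ List.range (p - 4), rhoBlock (2 * p + 2) (p - 4 - t) =
      τ (asc (2 * p + 2) 3 (2 * (p - (4 + t)) + 2) *
        asc (2 * p + 2) 1 (2 * (p - (4 + t)) + 1)) := by
    intro t ht
    have hlt := List.mem_range.mp ht
    rw [← Nat.sub_sub]
    exact rhoBlock_eq_conj _ (by omega)
  rw [List.map_congr_left hblock, ← Function.comp_def, ← List.map_map, ← map_list_prod, hτ,
    MulAut.conj_apply, inv_inv]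
end

section
/- Let p ≥ 5 and let B_{2p+2} be the braid group with Artin generators σ_1,…,σ_{2p+1}, and let B⁺ be the submonoid of B_{2p+2} generated by σ_1,…,σ_{2p+1}. Let ρ̌ = σ_1^{−1}·(∏_{i=4}^{p−1} (σ_3σ_4⋯σ_{2(p−i)+2})(σ_1σ_2⋯σ_{2(p−i)+1}))·σ_1 (product in increasing order of i). Then for every index 1 ≤ j ≤ 2p+1, the element σ_j^{−1}ρ̌ belongs to B⁺ if and only if j is odd and 3 ≤ j ≤ 2p−7. In other words, the starting set S(ρ̌) = {j : σ_j left-divides ρ̌ in B⁺} equals {3, 5, 7, …, 2p−7}. -/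
/-- The positive braid monoid `B⁺`: the submonoid of `B_n` generated by the
Artin generators `σ_1, …, σ_{n-1}`. -/
def Bpos (n : ℕ) : Submonoid (BraidGroup n) :=
  Submonoid.closure {x | ∃ i, 1 ≤ i ∧ i ≤ n - 1 ∧ x = σ n i}

/-- The conjugator `ρ̌ = ρ_{Ǎ}` of formula (∗):
`σ_1⁻¹ (∏_{i=4}^{p-1} (σ_3⋯σ_{2(p-i)+2})(σ_1⋯σ_{2(p-i)+1})) σ_1` in `B_{2p+2}`. -/
def rhoCheck (p : ℕ) : BraidGroup (2 * p + 2) :=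
  (σ (2 * p + 2) 1)⁻¹ *
    ((List.range (p - 4)).map (fun t =>
      asc (2 * p + 2) 3 (2 * (p - (4 + t)) + 2) *
      asc (2 * p + 2) 1 (2 * (p - (4 + t)) + 1))).prod *
    σ (2 * p + 2) 1

/-!
Conjugating each factor of the product in `(∗)` by `σ_1` turns `ρ̌` into the positive word
`block (p - 4) ⋯ block 1`, where `block k = (σ_3 ⋯ σ_{2k+2}) (σ_2 ⋯ σ_{2k+1}) σ_1`.

Every block is left divisible by `σ_3`, and `block k * σ_t = σ_{t+2} * block k` for `3 ≤ t ≤ 2k`: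
the divisors `σ_3` of the later blocks move to the left and become `σ_5, σ_7, …`.

Conversely, if `σ_j` left divides a positive braid `β`, then the strands of `β` starting at `j` and
`j + 1` cross. The permutation of a braid and the signed crossing numbers of its pairs of strands
together form a homomorphism from the braid group to a semidirect product. Following the strands through the blocks shows that in `ρ̌` the
strands starting at `j` and `j + 1` never cross, unless `j` is one of `3, 5, …, 2p - 7`.
-/

namespace BraidGroup

variable {n : ℕ}

theorem σ_of_mem {i : ℕ} (h1 : 1 ≤ i) (h2 : i ≤ n - 1) :
    σ n i = (PresentedGroup.of ⟨i - 1, by omega⟩ : PresentedGroup (braidRels (n - 1))) :=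
  dif_pos ⟨h1, h2⟩

theorem σ_of_not_mem {i : ℕ} (h : ¬(1 ≤ i ∧ i ≤ n - 1)) : σ n i = 1 :=
  dif_neg h

theorem σ_commute_of_add_two_le {i j : ℕ} (hij : i + 2 ≤ j) : Commute (σ n i) (σ n j) := by
  by_cases hi : 1 ≤ i ∧ i ≤ n - 1
  · by_cases hj : 1 ≤ j ∧ j ≤ n - 1
    · rw [← commutatorElement_eq_one_iff_commute, σ_of_mem hi.1 hi.2, σ_of_mem hj.1 hj.2]
      exact PresentedGroup.one_of_mem <| Or.inl ⟨⟨i - 1, by omega⟩, ⟨j - 1, by omega⟩,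
        by dsimp only; omega, rfl⟩
    · exact σ_of_not_mem hj ▸ Commute.one_right _
  · exact σ_of_not_mem hi ▸ Commute.one_left _

theorem σ_braid {i : ℕ} (h1 : 1 ≤ i) (h2 : i + 1 ≤ n - 1) :
    σ n i * σ n (i + 1) * σ n i = σ n (i + 1) * σ n i * σ n (i + 1) := by
  rw [σ_of_mem h1 (by omega), σ_of_mem (by omega) h2, ← mul_inv_eq_one]
  exact PresentedGroup.one_of_mem <| Or.inr ⟨⟨i - 1, by omega⟩, ⟨i + 1 - 1, by omega⟩,
    by dsimp only; omega, rfl⟩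

section Lift

variable {G : Type*} [Group G] {f : ℕ → G}

theorem lift_rels (hcomm : ∀ i j, i + 2 ≤ j → Commute (f i) (f j))
    (hbraid : ∀ i, f i * f (i + 1) * f i = f (i + 1) * f i * f (i + 1)) :
    ∀ r ∈ braidRels (n - 1), FreeGroup.lift (fun i : Fin (n - 1) ↦ f (i + 1)) r = 1 := by
  rintro r (⟨i, j, hij, rfl⟩ | ⟨i, j, hij, rfl⟩)
  · simpa [commutatorElement_def] using
      commutatorElement_eq_one_iff_commute.2 (hcomm (i + 1) (j + 1) (by omega))
  · simpa only [map_mul, map_inv, FreeGroup.lift_apply_of, hij, mul_inv_eq_one] using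
      hbraid (i + 1)

/-- The universal property of the braid group: a sequence satisfying the braid relations
defines a homomorphism sending `σ_i` to its `i`-th term. -/
def lift (hcomm : ∀ i j, i + 2 ≤ j → Commute (f i) (f j))
    (hbraid : ∀ i, f i * f (i + 1) * f i = f (i + 1) * f i * f (i + 1)) : BraidGroup n →* G :=
  (PresentedGroup.toGroup (lift_rels hcomm hbraid) : PresentedGroup (braidRels (n - 1)) →* G)

theorem lift_σ (hcomm : ∀ i j, i + 2 ≤ j → Commute (f i) (f j))
    (hbraid : ∀ i, f i * f (i + 1) * f i = f (i + 1) * f i * f (i + 1))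
    {i : ℕ} (h1 : 1 ≤ i) (h2 : i ≤ n - 1) : lift hcomm hbraid (σ n i) = f i := by
  rw [σ_of_mem h1 h2]
  refine (PresentedGroup.toGroup.of (lift_rels hcomm hbraid)).trans ?_
  rw [Nat.sub_add_cancel h1]

end Lift

theorem asc_of_lt {a b : ℕ} (h : b < a) : asc n a b = 1 := by
  simp [asc, Nat.sub_eq_zero_of_le h]

theorem asc_succ {a b : ℕ} (h : a ≤ b + 1) : asc n a (b + 1) = asc n a b * σ n (b + 1) := by
  simp [asc, Nat.succ_sub h, List.range_succ, Nat.add_sub_cancel' h]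

theorem asc_eq_σ_mul {a b : ℕ} (h : a ≤ b) : asc n a b = σ n a * asc n (a + 1) b := by
  simp [asc, Nat.succ_sub h, List.range_succ_eq_map, Function.comp_def, Nat.add_assoc,
    Nat.add_comm 1]

theorem asc_self (a : ℕ) : asc n a a = σ n a := by
  rw [asc_eq_σ_mul le_rfl, asc_of_lt a.lt_succ_self, mul_one]

theorem asc_mem {S : Submonoid (BraidGroup n)} {a b : ℕ}
    (h : ∀ i, a ≤ i → i ≤ b → σ n i ∈ S) : asc n a b ∈ S := by
  refine S.list_prod_mem fun x hx ↦ ?_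
  obtain ⟨t, ht, rfl⟩ := List.mem_map.1 hx
  have := List.mem_range.1 ht
  exact h _ (by omega) (by omega)

theorem asc_commute_σ {a b t : ℕ} (h : b + 2 ≤ t ∨ t + 2 ≤ a) :
    Commute (asc n a b) (σ n t) := by
  suffices asc n a b ∈ Submonoid.centralizer {σ n t} from
    (Submonoid.mem_centralizer_iff.1 this _ rfl).symm
  refine asc_mem fun i ha hb ↦ Submonoid.mem_centralizer_iff.2 ?_
  rintro _ rfl
  rcases h with h | h
  · exact (σ_commute_of_add_two_le (by omega)).symm
  · exact σ_commute_of_add_two_le (by omega)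

theorem asc_semiconjBy_σ {a b t : ℕ} (ht : 1 ≤ t) (ha : a ≤ t) (hb : t + 1 ≤ b)
    (hn : t + 1 ≤ n - 1) : SemiconjBy (asc n a b) (σ n t) (σ n (t + 1)) := by
  induction b, hb using Nat.le_induction with
  | base =>
    obtain ⟨s, rfl⟩ := Nat.exists_eq_add_of_le' ht
    rw [asc_succ (by omega), asc_succ ha, mul_assoc]
    have hfar : Commute (asc n a s) (σ n (s + 1 + 1)) := asc_commute_σ (Or.inl le_rfl)
    have hbraid : SemiconjBy (σ n (s + 1) * σ n (s + 1 + 1)) (σ n (s + 1)) (σ n (s + 1 + 1)) :=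
      (σ_braid ht hn).trans (mul_assoc _ _ _)
    exact hfar.semiconjBy.mul_left hbraid
  | succ b hb ih =>
    rw [asc_succ (by omega)]
    exact ih.mul_left (σ_commute_of_add_two_le (by omega)).symm.semiconjBy

theorem σ_mem_Bpos (i : ℕ) : σ n i ∈ Bpos n := by
  by_cases h : 1 ≤ i ∧ i ≤ n - 1
  · exact Submonoid.subset_closure ⟨i, h.1, h.2, rfl⟩
  · exact σ_of_not_mem h ▸ one_mem _

theorem asc_mem_Bpos (a b : ℕ) : asc n a b ∈ Bpos n :=
  asc_mem fun i _ _ ↦ σ_mem_Bpos i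

/-- The group of a permutation `g` of the positions together with an integer for each pair of
positions; in a product the integers of the second factor are pulled back along `g⁻¹`. -/
abbrev CrossingGroup (α : Type*) : Type _ :=
  (α × α → Multiplicative ℤ) ⋊[mulAutArrow] Equiv.Perm α

namespace CrossingGroup

variable {α : Type*}

/-- The integer that an element of the crossing group attaches to the pair `(x, y)`. -/
def count (g : CrossingGroup α) (x y : α) : ℤ :=
  (g.left (x, y)).toAdd

theorem count_mul (g h : CrossingGroup α) (x y : α) :
    (g * h).count x y = g.count x y + h.count (g.right⁻¹ x) (g.right⁻¹ y) :=
  rfl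

theorem ext_count {g h : CrossingGroup α} (hcount : ∀ x y, g.count x y = h.count x y)
    (hright : g.right = h.right) : g = h :=
  SemidirectProduct.ext (funext fun e ↦ Multiplicative.toAdd.injective (hcount e.1 e.2)) hright

variable [DecidableEq α]

/-- The half-twist of two strands: it exchanges the positions `a` and `b`, whose strands cross
once. -/
def halfTwist (a b : α) : CrossingGroup α :=
  ⟨fun e ↦ .ofAdd (if s(e.1, e.2) = s(a, b) then 1 else 0), Equiv.swap a b⟩

theorem halfTwist_right (a b : α) : (halfTwist a b).right = Equiv.swap a b :=
  rfl

theorem count_halfTwist (a b x y : α) :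
    (halfTwist a b).count x y = if s(x, y) = s(a, b) then 1 else 0 :=
  rfl

theorem count_halfTwist_inv_apply (g : Equiv.Perm α) (a b x y : α) :
    (halfTwist a b).count (g⁻¹ x) (g⁻¹ y) = (halfTwist (g a) (g b)).count x y := by
  simp only [count_halfTwist, Sym2.eq_iff, Equiv.Perm.inv_eq_iff_eq]

theorem halfTwist_commute {a b c d : α} (hac : a ≠ c) (had : a ≠ d) (hbc : b ≠ c) (hbd : b ≠ d) :
    Commute (halfTwist a b) (halfTwist c d) := by
  refine ext_count (fun x y ↦ ?_) ?_
  · simp only [count_mul, halfTwist_right, count_halfTwist_inv_apply,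
      Equiv.swap_apply_of_ne_of_ne hac.symm hbc.symm,
      Equiv.swap_apply_of_ne_of_ne had.symm hbd.symm,
      Equiv.swap_apply_of_ne_of_ne hac had, Equiv.swap_apply_of_ne_of_ne hbc hbd]
    exact add_comm _ _
  · exact (Equiv.mul_swap_eq_swap_mul _ c d).trans <| by
      rw [halfTwist_right, Equiv.swap_apply_of_ne_of_ne hac.symm hbc.symm,
        Equiv.swap_apply_of_ne_of_ne had.symm hbd.symm]
      rfl

-- On both sides each of the three pairs among `a`, `b`, `c` crosses exactly once.
theorem halfTwist_braid {a b c : α} (hab : a ≠ b) (hac : a ≠ c) (hbc : b ≠ c) :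
    halfTwist a b * halfTwist b c * halfTwist a b =
      halfTwist b c * halfTwist a b * halfTwist b c := by
  refine ext_count (fun x y ↦ ?_) ?_
  · simp only [count_mul, SemidirectProduct.mul_right, halfTwist_right, count_halfTwist_inv_apply,
      Equiv.Perm.mul_apply, Equiv.swap_apply_left, Equiv.swap_apply_right,
      Equiv.swap_apply_of_ne_of_ne hab hac, Equiv.swap_apply_of_ne_of_ne hac.symm hbc.symm]
    ring
  · simp only [SemidirectProduct.mul_right, halfTwist_right]
    rw [Equiv.swap_mul_swap_mul_swap hab hac, Equiv.swap_comm a b, Equiv.swap_comm b c,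
      Equiv.swap_mul_swap_mul_swap hbc.symm hac.symm, Equiv.swap_comm]

end CrossingGroup

/-- The homomorphism recording the permutation and the crossing counts of a braid; the permutation
sends the right end of each strand to its left end. -/
def toCrossingGroup : BraidGroup n →* CrossingGroup ℕ :=
  lift (f := fun i ↦ CrossingGroup.halfTwist i (i + 1))
    (fun _ _ _ ↦ CrossingGroup.halfTwist_commute (by omega) (by omega) (by omega) (by omega))
    (fun _ ↦ CrossingGroup.halfTwist_braid (by omega) (by omega) (by omega))

theorem toCrossingGroup_σ {i : ℕ} (h1 : 1 ≤ i) (h2 : i ≤ n - 1) :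
    toCrossingGroup (σ n i) = CrossingGroup.halfTwist i (i + 1) :=
  lift_σ _ _ h1 h2

/-- The signed number of crossings between the strands of `β` that start at the left positions
`x` and `y`. -/
def crossing (β : BraidGroup n) (x y : ℕ) : ℤ :=
  (toCrossingGroup β).count x y

/-- The right position at which the strand of `β` starting at the left position `x` ends. -/
def strandEnd (β : BraidGroup n) (x : ℕ) : ℕ :=
  (toCrossingGroup β).right⁻¹ x

@[simp]
theorem crossing_one (x y : ℕ) : crossing (1 : BraidGroup n) x y = 0 := by
  simp [crossing, CrossingGroup.count]

@[simp]
theorem strandEnd_one (x : ℕ) : strandEnd (1 : BraidGroup n) x = x := by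
  simp [strandEnd]

theorem crossing_mul (α β : BraidGroup n) (x y : ℕ) :
    crossing (α * β) x y = crossing α x y + crossing β (strandEnd α x) (strandEnd α y) := by
  simp only [crossing, map_mul, CrossingGroup.count_mul, strandEnd]

theorem strandEnd_mul (α β : BraidGroup n) (x : ℕ) :
    strandEnd (α * β) x = strandEnd β (strandEnd α x) := by
  simp [strandEnd]

theorem crossing_σ {i : ℕ} (h1 : 1 ≤ i) (h2 : i ≤ n - 1) (x y : ℕ) :
    crossing (σ n i) x y = if x = i ∧ y = i + 1 ∨ x = i + 1 ∧ y = i then 1 else 0 := by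
  simp only [crossing, toCrossingGroup_σ h1 h2, CrossingGroup.count_halfTwist, Sym2.eq_iff]

theorem strandEnd_σ {i : ℕ} (h1 : 1 ≤ i) (h2 : i ≤ n - 1) (x : ℕ) :
    strandEnd (σ n i) x = if x = i then i + 1 else if x = i + 1 then i else x := by
  rw [strandEnd, toCrossingGroup_σ h1 h2, CrossingGroup.halfTwist_right, Equiv.swap_inv,
    Equiv.swap_apply_def]

theorem crossing_nonneg_of_mem_Bpos {β : BraidGroup n} (hβ : β ∈ Bpos n) (x y : ℕ) :
    0 ≤ crossing β x y := by
  induction hβ using Submonoid.closure_induction generalizing x y with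
  | mem β hβ =>
    obtain ⟨i, h1, h2, rfl⟩ := hβ
    rw [crossing_σ h1 h2]
    positivity
  | one => rw [crossing_one]
  | mul α β _ _ hα hβ => exact crossing_mul α β x y ▸ add_nonneg (hα _ _) (hβ _ _)

theorem one_le_crossing_of_inv_σ_mul_mem_Bpos {β : BraidGroup n} {j : ℕ} (h1 : 1 ≤ j)
    (h2 : j ≤ n - 1) (h : (σ n j)⁻¹ * β ∈ Bpos n) : 1 ≤ crossing β j (j + 1) := by
  have hrest := crossing_nonneg_of_mem_Bpos h (j + 1) j
  rw [← mul_inv_cancel_left (σ n j) β, crossing_mul]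
  simpa [crossing_σ h1 h2, strandEnd_σ h1 h2] using hrest

theorem strandEnd_asc {a b : ℕ} (ha : 1 ≤ a) (hab : a ≤ b) (hb : b ≤ n - 1) (x : ℕ) :
    strandEnd (asc n a b) x =
      if x = a then b + 1 else if a < x ∧ x ≤ b + 1 then x - 1 else x := by
  induction b, hab using Nat.le_induction with
  | base =>
    rw [asc_self, strandEnd_σ ha hb]
    grind
  | succ b hab ih =>
    rw [asc_succ (by omega), strandEnd_mul, ih (by omega), strandEnd_σ (by omega) hb]
    grind

theorem crossing_asc {a b : ℕ} (ha : 1 ≤ a) (hab : a ≤ b) (hb : b ≤ n - 1) (x y : ℕ) :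
    crossing (asc n a b) x y =
      if x = a ∧ a < y ∧ y ≤ b + 1 ∨ y = a ∧ a < x ∧ x ≤ b + 1 then 1 else 0 := by
  induction b, hab using Nat.le_induction with
  | base =>
    rw [asc_self, crossing_σ ha hb]
    grind
  | succ b hab ih =>
    rw [asc_succ (by omega), crossing_mul, ih (by omega), crossing_σ (by omega) hb,
      strandEnd_asc ha hab (by omega), strandEnd_asc ha hab (by omega)]
    grind

/-- The braids in which the strand at position `y` runs straight and has crossing number zero
with every other strand. -/
def straightAt (n y : ℕ) : Submonoid (BraidGroup n) where
  carrier := {β | strandEnd β y = y ∧ ∀ x, crossing β x y = 0}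
  one_mem' := ⟨strandEnd_one y, fun x ↦ crossing_one x y⟩
  mul_mem' := by
    rintro α β ⟨hα, hα'⟩ ⟨hβ, hβ'⟩
    exact ⟨by rw [strandEnd_mul, hα, hβ], fun x ↦ by rw [crossing_mul, hα, hα', hβ', add_zero]⟩

theorem σ_mem_straightAt {i y : ℕ} (h : i + 2 ≤ y) : σ n i ∈ straightAt n y := by
  by_cases hi : 1 ≤ i ∧ i ≤ n - 1
  · refine ⟨?_, fun x ↦ ?_⟩
    · rw [strandEnd_σ hi.1 hi.2]
      grind
    · rw [crossing_σ hi.1 hi.2]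
      grind
  · exact σ_of_not_mem hi ▸ one_mem _

/-- The factor `(σ_3 ⋯ σ_{2k+2}) (σ_2 ⋯ σ_{2k+1}) σ_1`: a factor of the product in `(∗)`
conjugated by `σ_1`. -/
def block (n k : ℕ) : BraidGroup n :=
  asc n 3 (2 * k + 2) * asc n 2 (2 * k + 1) * σ n 1

/-- The product of `block n k, …, block n 1`; it is a positive word for `ρ̌` when `n = 2p + 2` and
`k = p - 4`. -/
def blockProd (n : ℕ) : ℕ → BraidGroup n
  | 0 => 1
  | k + 1 => block n (k + 1) * blockProd n k

theorem block_mem {S : Submonoid (BraidGroup n)} {k : ℕ} (h : ∀ i ≤ 2 * k + 2, σ n i ∈ S) :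
    block n k ∈ S :=
  S.mul_mem (S.mul_mem (asc_mem fun i _ hi ↦ h i hi) (asc_mem fun i _ hi ↦ h i (by omega)))
    (h 1 (by omega))

theorem blockProd_mem {S : Submonoid (BraidGroup n)} {k : ℕ} (h : ∀ i ≤ 2 * k + 2, σ n i ∈ S) :
    blockProd n k ∈ S := by
  induction k with
  | zero => exact S.one_mem
  | succ k ih => exact S.mul_mem (block_mem h) (ih fun i hi ↦ h i (by omega))

theorem asc_mul_asc_eq_conj_block (k : ℕ) :
    asc n 3 (2 * k + 2) * asc n 1 (2 * k + 1) = σ n 1 * block n k * (σ n 1)⁻¹ := by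
  have hcomm : Commute (asc n 3 (2 * k + 2)) (σ n 1) := asc_commute_σ (Or.inr le_rfl)
  rw [asc_eq_σ_mul (by omega : 1 ≤ 2 * k + 1), ← mul_assoc, hcomm.eq, block]
  group

theorem prod_asc_mul_asc_eq_conj_blockProd (k : ℕ) :
    ((List.range k).map fun t ↦
      asc n 3 (2 * (k - t) + 2) * asc n 1 (2 * (k - t) + 1)).prod =
      σ n 1 * blockProd n k * (σ n 1)⁻¹ := by
  induction k with
  | zero => simp [blockProd]
  | succ k ih =>
    simp only [List.range_succ_eq_map, List.map_cons, List.map_map, List.prod_cons,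
      Function.comp_def, Nat.succ_eq_add_one, Nat.add_sub_add_right, Nat.sub_zero, ih]
    rw [asc_mul_asc_eq_conj_block, blockProd]
    group

theorem rhoCheck_eq_blockProd (p : ℕ) : rhoCheck p = blockProd (2 * p + 2) (p - 4) := by
  simp only [rhoCheck, Nat.sub_add_eq, prod_asc_mul_asc_eq_conj_blockProd]
  group

theorem block_semiconjBy_σ {k t : ℕ} (h3 : 3 ≤ t) (ht : t ≤ 2 * k) (hk : 2 * k + 2 ≤ n - 1) :
    SemiconjBy (block n k) (σ n t) (σ n (t + 2)) := by
  have hasc3 : SemiconjBy (asc n 3 (2 * k + 2)) (σ n (t + 1)) (σ n (t + 2)) :=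
    asc_semiconjBy_σ (by omega) (by omega) (by omega) (by omega)
  have hasc2 : SemiconjBy (asc n 2 (2 * k + 1)) (σ n t) (σ n (t + 1)) :=
    asc_semiconjBy_σ (by omega) (by omega) (by omega) (by omega)
  exact (hasc3.mul_left hasc2).mul_left (σ_commute_of_add_two_le h3).semiconjBy

theorem inv_σ_three_mul_block_mem_Bpos {k : ℕ} (hk : 1 ≤ k) :
    (σ n 3)⁻¹ * block n k ∈ Bpos n := by
  rw [block, asc_eq_σ_mul (by omega : 3 ≤ 2 * k + 2), mul_assoc, mul_assoc, inv_mul_cancel_left]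
  exact mul_mem (asc_mem_Bpos _ _) (mul_mem (asc_mem_Bpos _ _) (σ_mem_Bpos _))

theorem inv_σ_mul_blockProd_mem_Bpos {k i : ℕ} (hi : 1 ≤ i) (hik : i ≤ k)
    (hk : 2 * k + 2 ≤ n - 1) : (σ n (2 * i + 1))⁻¹ * blockProd n k ∈ Bpos n := by
  induction k generalizing i with
  | zero => omega
  | succ k ih =>
    rw [blockProd, ← mul_assoc]
    obtain rfl | hi := eq_or_lt_of_le hi
    · exact mul_mem (inv_σ_three_mul_block_mem_Bpos (by omega))
        (blockProd_mem fun i _ ↦ σ_mem_Bpos i)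
    obtain ⟨i, rfl⟩ := Nat.exists_eq_add_of_le' hi.le
    have hpush : SemiconjBy (block n (k + 1)) (σ n (2 * i + 1)) (σ n (2 * (i + 1) + 1)) :=
      block_semiconjBy_σ (by omega) (by omega) hk
    rw [← hpush.inv_right.eq, mul_assoc]
    exact mul_mem (block_mem fun i _ ↦ σ_mem_Bpos i) (ih (by omega) (by omega) (by omega))

theorem blockProd_mem_straightAt {k y : ℕ} (hy : 2 * k + 4 ≤ y) :
    blockProd n k ∈ straightAt n y :=
  blockProd_mem fun _ _ ↦ σ_mem_straightAt (by omega)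

theorem crossing_blockProd_of_le {k y : ℕ} (hy : 2 * k + 4 ≤ y) (x : ℕ) :
    crossing (blockProd n k) x y = 0 :=
  (blockProd_mem_straightAt hy).2 x

theorem strandEnd_block {k : ℕ} (h1 : 1 ≤ k) (hk : 2 * k + 2 ≤ n - 1) (x : ℕ) :
    strandEnd (block n k) x =
      if x = 1 then 2 else if x = 2 then 2 * k + 2 else if x = 3 then 2 * k + 3
      else if x = 4 then 1 else if 5 ≤ x ∧ x ≤ 2 * k + 3 then x - 2 else x := by
  simp only [block, strandEnd_mul]
  rw [strandEnd_asc (by omega) (by omega) hk, strandEnd_asc (by omega) (by omega) (by omega),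
    strandEnd_σ (by omega) (by omega)]
  grind

theorem crossing_block_of_lt {k : ℕ} (h1 : 1 ≤ k) (hk : 2 * k + 2 ≤ n - 1) {x y : ℕ}
    (hxy : x < y) :
    crossing (block n k) x y =
      if (x = 2 ∨ x = 3) ∧ 4 ≤ y ∧ y ≤ 2 * k + 3 ∨ x = 1 ∧ y = 4 then 1 else 0 := by
  have hasc3 : crossing (asc n 3 (2 * k + 2)) x y =
      if x = 3 ∧ 4 ≤ y ∧ y ≤ 2 * k + 3 then 1 else 0 := by
    rw [crossing_asc (by omega) (by omega) hk]
    grind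
  have hasc2 : crossing (asc n 2 (2 * k + 1)) (strandEnd (asc n 3 (2 * k + 2)) x)
      (strandEnd (asc n 3 (2 * k + 2)) y) =
      if x = 2 ∧ 4 ≤ y ∧ y ≤ 2 * k + 3 then 1 else 0 := by
    rw [crossing_asc (by omega) (by omega) (by omega), strandEnd_asc (by omega) (by omega) hk,
      strandEnd_asc (by omega) (by omega) hk]
    grind
  have hasc (z : ℕ) : strandEnd (asc n 3 (2 * k + 2) * asc n 2 (2 * k + 1)) z =
      if z = 2 then 2 * k + 2 else if z = 3 then 2 * k + 3
      else if 4 ≤ z ∧ z ≤ 2 * k + 3 then z - 2 else z := by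
    rw [strandEnd_mul, strandEnd_asc (by omega) (by omega) hk,
      strandEnd_asc (by omega) (by omega) (by omega)]
    grind
  have hσ : crossing (σ n 1) (strandEnd (asc n 3 (2 * k + 2) * asc n 2 (2 * k + 1)) x)
      (strandEnd (asc n 3 (2 * k + 2) * asc n 2 (2 * k + 1)) y) =
      if x = 1 ∧ y = 4 then 1 else 0 := by
    rw [crossing_σ (by omega) (by omega), hasc, hasc]
    grind
  rw [block, crossing_mul, crossing_mul, hasc3, hasc2, hσ]
  grind

theorem crossing_blockProd_succ {k : ℕ} (hk : 2 * k + 4 ≤ n - 1) {x y : ℕ} (hxy : x < y)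
    (h : ¬((x = 2 ∨ x = 3) ∧ 4 ≤ y ∧ y ≤ 2 * k + 5 ∨ x = 1 ∧ y = 4)) :
    crossing (blockProd n (k + 1)) x y = crossing (blockProd n k)
      (strandEnd (block n (k + 1)) x) (strandEnd (block n (k + 1)) y) := by
  rw [blockProd, crossing_mul, crossing_block_of_lt (by omega) hk hxy, if_neg (by omega), zero_add]

theorem crossing_blockProd_one {k y : ℕ} (hk : 2 * k + 2 ≤ n - 1) (hy : y = 2 ∨ y = 3) :
    crossing (blockProd n k) 1 y = 0 := by
  cases k with
  | zero => exact crossing_one 1 y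
  | succ k =>
    have hend : 2 * k + 4 ≤ strandEnd (block n (k + 1)) y := by
      rw [strandEnd_block (by omega) hk]
      grind
    rw [crossing_blockProd_succ hk (by omega) (by omega)]
    exact crossing_blockProd_of_le hend _

theorem crossing_blockProd_of_even {k j : ℕ} (hk : 2 * k + 2 ≤ n - 1) (hj : Even j) (h2 : 2 ≤ j) :
    crossing (blockProd n k) j (j + 1) = 0 := by
  induction k generalizing j with
  | zero => exact crossing_one j (j + 1)
  | succ k ih =>
    rcases lt_or_ge (2 * k + 5) j with hlarge | hsmall
    · exact crossing_blockProd_of_le (by omega) j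
    rw [crossing_blockProd_succ hk j.lt_succ_self (by grind)]
    obtain rfl | rfl | h6 : j = 2 ∨ j = 4 ∨ 6 ≤ j := by grind
    · have hend : 2 * k + 4 ≤ strandEnd (block n (k + 1)) 3 := by
        rw [strandEnd_block (by omega) hk]
        grind
      exact crossing_blockProd_of_le hend _
    · have hleft : strandEnd (block n (k + 1)) 4 = 1 := strandEnd_block (by omega) hk 4
      have hright : strandEnd (block n (k + 1)) 5 = 3 := by
        rw [strandEnd_block (by omega) hk]
        grind
      rw [hleft, hright]
      exact crossing_blockProd_one (by omega) (Or.inr rfl)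
    · obtain ⟨i, rfl⟩ := Nat.exists_eq_add_of_le' (by omega : 4 ≤ j)
      have hleft : strandEnd (block n (k + 1)) (i + 4) = i + 2 := by
        rw [strandEnd_block (by omega) hk]
        grind
      have hright : strandEnd (block n (k + 1)) (i + 4 + 1) = i + 2 + 1 := by
        rw [strandEnd_block (by omega) hk]
        grind
      rw [hleft, hright]
      exact ih (by omega) (by grind) (by omega)

theorem crossing_blockProd_eq_zero {k j : ℕ} (hk : 2 * k + 2 ≤ n - 1) (h1 : 1 ≤ j)
    (hj : ¬(Odd j ∧ 3 ≤ j ∧ j ≤ 2 * k + 1)) : crossing (blockProd n k) j (j + 1) = 0 := by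
  rcases Nat.even_or_odd j with heven | hodd
  · exact crossing_blockProd_of_even hk heven (by grind)
  · obtain rfl | hlarge : j = 1 ∨ 2 * k + 4 ≤ j + 1 := by grind
    · exact crossing_blockProd_one hk (Or.inl rfl)
    · exact crossing_blockProd_of_le hlarge j

theorem inv_σ_mul_blockProd_mem_Bpos_iff {k j : ℕ} (hk : 2 * k + 2 ≤ n - 1) (h1 : 1 ≤ j)
    (hj : j ≤ n - 1) :
    (σ n j)⁻¹ * blockProd n k ∈ Bpos n ↔ Odd j ∧ 3 ≤ j ∧ j ≤ 2 * k + 1 := by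
  refine ⟨fun hmem ↦ ?_, ?_⟩
  · by_contra hnot
    have hcross := one_le_crossing_of_inv_σ_mul_mem_Bpos h1 hj hmem
    rw [crossing_blockProd_eq_zero hk h1 hnot] at hcross
    exact absurd hcross (by norm_num)
  · rintro ⟨⟨i, rfl⟩, h3, hi⟩
    exact inv_σ_mul_blockProd_mem_Bpos (by omega) (by omega) hk

end BraidGroup

/-- The starting set of `ρ̌` is `{3, 5, 7, …, 2p-7}`: for `1 ≤ j ≤ 2p+1`,
`σ_j` left-divides `ρ̌` in the positive monoid `B⁺` iff `j` is odd and
`3 ≤ j ≤ 2p-7`. -/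
theorem startingSet_rhoCheck (p : ℕ) (hp : 5 ≤ p) :
    ∀ j : ℕ, 1 ≤ j → j ≤ 2 * p + 1 →
      ((σ (2 * p + 2) j)⁻¹ * rhoCheck p ∈ Bpos (2 * p + 2) ↔
        (Odd j ∧ 3 ≤ j ∧ j ≤ 2 * p - 7)) := by
  intro j h1 hj
  rw [BraidGroup.rhoCheck_eq_blockProd,
    BraidGroup.inv_σ_mul_blockProd_mem_Bpos_iff (by omega) h1 (by omega),
    show 2 * (p - 4) + 1 = 2 * p - 7 by omega]
end
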